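/- For every continuous f : Σ_N^+ → ℝ, every p ∈ V_* ∖ V_0 (so κ_p ≥ 1) and every m ≥ κ_p, H_m(G_μ f)(p) = −∫_{Σ_N^+} χ_p^m f dμ = −∫_{[p_1⋯p_{m+1}]} f dμ. -/

import Mathlib

open Filter Topology MeasureTheory Finset Classical

noncomputable section

/-- The one-sided full shift space `Σ_N^+` on `N` symbols; coordinates are indexed
from `0`, so the paper's `x_1 x_2 ⋯` is `x 0, x 1, ⋯` here. It carries the product
of the discrete topology on `Fin N`. -/
abbrev SSp (N : ℕ) : Type := ℕ → Fin N

/-- The level-`m` vertex set `V_m = {p : p_i = p_{i+1} for all i ≥ m+1}` (1-based),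
i.e. the sequences that are constant from (0-based) coordinate `m` on.  It is
realized as a `Finset` via the parametrization by the first `m+1` coordinates;
see `mem_V` for the defining property. -/
noncomputable def V (N m : ℕ) : Finset (SSp N) :=
  (Finset.univ : Finset (Fin (m + 1) → Fin N)).image
    (fun w j => w ⟨min j m, by omega⟩)

lemma const_from (N m : ℕ) (p : SSp N) (h : ∀ i, m ≤ i → p i = p (i + 1)) :
    ∀ j, m ≤ j → p j = p m := by
  intro j hj
  induction j with
  | zero => have : m = 0 := by omega
            simp [this]
  | succ k ih =>
      rcases Nat.lt_or_ge k m with hk | hk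
      · have : m = k + 1 := by omega
        simp [this]
      · rw [← h k hk]
        exact ih hk

/-- Membership in `V N m` is exactly the paper's condition
`p_i = p_{i+1}` for all `i ≥ m+1` (1-based), i.e. `p i = p (i+1)` for all `i ≥ m`. -/
lemma mem_V {N m : ℕ} {p : SSp N} :
    p ∈ V N m ↔ ∀ i, m ≤ i → p i = p (i + 1) := by
  classical
  constructor
  · intro hp i hi
    simp only [V, Finset.mem_image] at hp
    obtain ⟨w, -, rfl⟩ := hp
    have h1 : min i m = m := by omega
    have h2 : min (i + 1) m = m := by omega
    simp [h1, h2]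
  · intro h
    simp only [V, Finset.mem_image]
    refine ⟨fun j => p j, Finset.mem_univ _, ?_⟩
    funext j
    rcases Nat.lt_or_ge j m with hj | hj
    · have : min j m = j := by omega
      simp [this]
    · have : min j m = m := by omega
      simp only [this]
      exact (const_from N m p h j hj).symm

/-- The deleted neighbourhood `U_{p,m} = {q ∈ V_m : q ≠ p, q_i = p_i for 1 ≤ i ≤ m}`
(1-based), i.e. `q` agrees with `p` on the first `m` (0-based: `i < m`) coordinates. -/
noncomputable def U (N m : ℕ) (p : SSp N) : Finset (SSp N) :=
  (V N m).filter (fun q => q ≠ p ∧ ∀ i, i < m → q i = p i)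

/-- `κ_p = min {j : p ∈ V_j}`. -/
noncomputable def kappa (N : ℕ) (p : SSp N) : ℕ := sInf {j | p ∈ V N j}

/-- The difference operator
`H_m u (p) = Σ_{i = κ_p}^{m} Σ_{q ∈ U_{p,i}} (u(q) − u(p))`. -/
noncomputable def H (N m : ℕ) (u : SSp N → ℝ) (p : SSp N) : ℝ :=
  ∑ i ∈ Finset.Icc (kappa N p) m, ∑ q ∈ U N i p, (u q - u p)

/-- The Dirichlet form `E_{H_m}(u, v) = − Σ_{p ∈ V_m} u(p) · H_m v(p)`. -/
noncomputable def EH (N m : ℕ) (u v : SSp N → ℝ) : ℝ :=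
  -∑ p ∈ V N m, u p * H N m v p

/-- The cylinder set `[p_1 ⋯ p_m]`, determined by the first `m` coordinates of `p`. -/
def cyl (N m : ℕ) (p : SSp N) : Set (SSp N) := {x | ∀ i, i < m → x i = p i}

/-- `χ_p^m` : the indicator function of the cylinder set `[p_1 ⋯ p_{m+1}]`. -/
noncomputable def chi (N m : ℕ) (p : SSp N) : SSp N → ℝ :=
  (cyl N (m + 1) p).indicator 1

/-- `u ∈ dom E`: `u` is continuous and the energy
`E(u) = lim_m E_{H_m}(u|_{V_m})` exists (and is finite). -/
def MemDomE (N : ℕ) (u : SSp N → ℝ) : Prop :=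
  Continuous u ∧ ∃ L : ℝ, Tendsto (fun m => EH N m u u) atTop (nhds L)

/-- `v ∈ dom_M E`: `v` has finite energy and vanishes on the boundary `V_M`. -/
def MemDomME (N M : ℕ) (v : SSp N → ℝ) : Prop :=
  MemDomE N v ∧ ∀ p ∈ V N M, v p = 0

/-- `u ∈ 𝒟_M` with `Δ u = f` (strong formulation with boundary `V_M`):
`u` and `f` are continuous and
`lim_{m → ∞} max_{p ∈ V_m ∖ V_M} |N^{m+1} H_m u(p) − f(p)| = 0`. -/
def IsLaplacianOn (N M : ℕ) (u f : SSp N → ℝ) : Prop :=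
  Continuous u ∧ Continuous f ∧
    ∀ ε : ℝ, 0 < ε → ∃ m₀ : ℕ, ∀ m, m₀ ≤ m → ∀ p ∈ V N m, p ∉ V N M →
      |(N : ℝ) ^ (m + 1) * H N m u p - f p| < ε

/-- `u ∈ D_μ` with `Δ u = f` (original definition of the Laplacian):
`u` and `f` are continuous and
`lim_{m → ∞} max_{p ∈ V_m ∖ V_{m−1}} |N^{m+1} H_m u(p) − f(p)| = 0`
(the level is written `m+1` to avoid natural subtraction). -/
def IsLaplacianDmu (N : ℕ) (u f : SSp N → ℝ) : Prop :=
  Continuous u ∧ Continuous f ∧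
    ∀ ε : ℝ, 0 < ε → ∃ m₀ : ℕ, ∀ m, m₀ ≤ m → ∀ p ∈ V N (m + 1), p ∉ V N m →
      |(N : ℝ) ^ (m + 2) * H N (m + 1) u p - f p| < ε

/-- `μ` is the equidistributed Bernoulli measure:
`μ([p_1 ⋯ p_m]) = N^{−m}` for every cylinder set. -/
def IsBernoulli (N : ℕ) (μ : Measure (SSp N)) : Prop :=
  ∀ (m : ℕ) (p : SSp N), μ (cyl N m p) = (N : ENNReal)⁻¹ ^ m

/-- `ρ(x,y) = min {i : x_i ≠ y_i}` (1-based; `0`-based first disagreement plus one). -/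
noncomputable def rho (N : ℕ) (x y : SSp N) : ℕ := sInf {i | x i ≠ y i} + 1

/-- The matrix `(G_m)_{pq}`: `2/N` if `q = p`, `1/N` if `q ∈ U_{p,m}`, `0` otherwise. -/
noncomputable def Gmat (N m : ℕ) (p q : SSp N) : ℝ :=
  if q = p then 2 / N else if q ∈ U N m p then 1 / N else 0

/-- The Green's function
`g(x,y) = Σ_{m=1}^{ρ(x,y)−1} Σ_{r,s ∈ V_m ∖ V_{m−1}} (G_m)_{rs} χ_r^m(x) χ_s^m(y)`
for `ρ(x,y) > 1`, and `g(x,y) = 0` for `ρ(x,y) = 1` (the sum is then empty). -/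
noncomputable def greenFn (N : ℕ) (x y : SSp N) : ℝ :=
  ∑ m ∈ Finset.Icc 1 (rho N x y - 1),
    ∑ r ∈ (V N m).filter (fun r => r ∉ V N (m - 1)),
      ∑ s ∈ (V N m).filter (fun s => s ∉ V N (m - 1)),
        Gmat N m r s * chi N m r x * chi N m s y

/-- The Green's operator `G_μ f (x) = ∫_{Σ_N^+ ∖ {x}} g(x,y) f(y) dμ(y)`. -/
noncomputable def Gop (N : ℕ) (μ : Measure (SSp N)) (f : SSp N → ℝ) (x : SSp N) : ℝ :=
  ∫ y in ({x}ᶜ : Set (SSp N)), greenFn N x y * f y ∂μ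

/-!
Write `j + 1` for the level of a summand of the Green's function. Each `x` lies in exactly one
cylinder `[r_1 ⋯ r_{j+2}]` with `r ∈ V_{j+1}`, so the double sum over `r, s` collapses to
`k_j(x, y) = (χ_x^j(y) + χ_x^{j+1}(y)) / N` if both `x` and `y` change value between the coordinates
`j` and `j + 1` (counted from `0`), and to `0` otherwise.

A neighbour `q ∈ U_{p,j+1}` of `p ∈ V_{j+1}` agrees with `p` up to coordinate `j`, so the lower
levels cancel in `G_μ f(q) - G_μ f(p)`, and the higher ones vanish since `p` and `q` are constant
from `j + 1` on. Summing `k_j(q, y) - k_j(p, y)` over `q` leaves `-χ_p^{j+1}` if `p` changes value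
between `j` and `j + 1`, that is if `j + 1 = κ_p`, and `χ_p^j - χ_p^{j+1}` for `j + 1 > κ_p`; hence
`H_m` telescopes. As `μ` has no atoms, the point `x` left out of the integral defining `G_μ f(x)`
does not matter.
-/

section ShiftSpace

variable {N m j : ℕ} {p x y : SSp N}

lemma mem_cyl_succ : x ∈ cyl N (m + 1) p ↔ x ∈ cyl N m p ∧ x m = p m :=
  Nat.forall_lt_succ_right

lemma mem_cyl_comm : x ∈ cyl N m y ↔ y ∈ cyl N m x :=
  PiNat.mem_cylinder_comm y x m

lemma measurableSet_cyl (N m : ℕ) (p : SSp N) : MeasurableSet (cyl N m p) :=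
  .pi (Set.to_countable (Set.Iio m)) fun i _ => measurableSet_singleton (p i)

lemma chi_apply (N m : ℕ) (p x : SSp N) : chi N m p x = if x ∈ cyl N (m + 1) p then 1 else 0 :=
  Set.indicator_apply _ _ _

lemma chi_succ (m : ℕ) (p x : SSp N) :
    chi N (m + 1) p x = if x (m + 1) = p (m + 1) then chi N m p x else 0 := by
  simp only [chi_apply, mem_cyl_succ (m := m + 1), and_comm (b := x (m + 1) = _), ite_and]

lemma chi_congr (h : x ∈ cyl N (m + 1) y) : chi N m x = chi N m y := by
  have hcyl : cyl N (m + 1) x = cyl N (m + 1) y := PiNat.mem_cylinder_iff_eq.1 h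
  rw [chi, chi, hcyl]

lemma chi_mul_eq_indicator (N m : ℕ) (p : SSp N) (f : SSp N → ℝ) :
    (fun x => chi N m p x * f x) = (cyl N (m + 1) p).indicator f := by
  ext x
  simp [chi, Set.indicator_apply]

/-- The unique vertex of level `m` whose cylinder of length `m + 1` contains `x`. -/
def vertex (m : ℕ) (x : SSp N) : SSp N := fun i => x (min i m)

lemma vertex_apply_of_le {i : ℕ} (hi : i ≤ m) : vertex m x i = x i := by
  rw [vertex, min_eq_left hi]

lemma vertex_mem_cyl (m : ℕ) (x : SSp N) : vertex m x ∈ cyl N (m + 1) x :=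
  fun _ hi => vertex_apply_of_le (Nat.le_of_lt_succ hi)

lemma vertex_mem_V_iff {k : ℕ} : vertex m x ∈ V N k ↔ ∀ i, k ≤ i → i < m → x i = x (i + 1) := by
  rw [mem_V]
  refine forall₂_congr fun i _ => ?_
  rcases lt_or_ge i m with hi | hi
  · rw [vertex_apply_of_le hi.le, vertex_apply_of_le hi]
    simp [hi]
  · simp [vertex, hi, hi.trans i.le_succ, hi.not_gt]

lemma vertex_mem_V (m : ℕ) (x : SSp N) : vertex m x ∈ V N m :=
  vertex_mem_V_iff.2 fun _ h h' => absurd h' h.not_gt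

lemma vertex_succ_mem_V_iff : vertex (m + 1) x ∈ V N m ↔ x m = x (m + 1) := by
  rw [vertex_mem_V_iff]
  refine ⟨fun h => h m le_rfl m.lt_succ_self, fun h i hi hi' => ?_⟩
  rwa [show i = m by omega]

lemma vertex_eq_self (hp : p ∈ V N m) : vertex m p = p := by
  ext1 i
  rcases le_total i m with hi | hi
  · exact vertex_apply_of_le hi
  · rw [vertex, min_eq_right hi, const_from N m p (mem_V.1 hp) i hi]

lemma vertex_eq_vertex_iff : vertex m x = vertex m y ↔ x ∈ cyl N (m + 1) y := by
  refine ⟨fun h i hi => ?_, fun h => funext fun i => h _ (by omega)⟩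
  simpa only [vertex_apply_of_le (Nat.le_of_lt_succ hi)] using congrFun h i

lemma chi_apply_of_mem_V (hp : p ∈ V N m) (x : SSp N) :
    chi N m p x = if p = vertex m x then 1 else 0 := by
  rw [chi_apply, mem_cyl_comm, ← vertex_eq_vertex_iff, vertex_eq_self hp]

lemma sum_filter_V_mul_chi (P : SSp N → Prop) [DecidablePred P] (F : SSp N → ℝ) (m : ℕ)
    (x : SSp N) :
    ∑ r ∈ (V N m).filter P, F r * chi N m r x = if P (vertex m x) then F (vertex m x) else 0 := by
  have hchi : ∀ r ∈ (V N m).filter P,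
      F r * chi N m r x = if r = vertex m x then F r else 0 := fun r hr => by
    rw [chi_apply_of_mem_V (mem_filter.1 hr).1, mul_ite, mul_one, mul_zero]
  rw [sum_congr rfl hchi, sum_ite_eq']
  simp only [mem_filter, vertex_mem_V, true_and]

lemma vertex_update_self (m : ℕ) (p : SSp N) (a : Fin N) :
    vertex m (Function.update p m a) m = a := by
  rw [vertex_apply_of_le le_rfl, Function.update_self]

lemma vertex_update_of_mem_U {q : SSp N} (hq : q ∈ U N m p) :
    vertex m (Function.update p m (q m)) = q := by
  obtain ⟨hqV, -, hqp⟩ := mem_filter.1 hq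
  have hagree : Function.update p m (q m) ∈ cyl N (m + 1) q := by
    refine mem_cyl_succ.2 ⟨fun i hi => ?_, Function.update_self ..⟩
    rw [Function.update_of_ne hi.ne, hqp i hi]
  rw [vertex_eq_vertex_iff.2 hagree, vertex_eq_self hqV]

lemma vertex_update_mem_U {a : Fin N} (ha : a ≠ p m) :
    vertex m (Function.update p m a) ∈ U N m p := by
  refine mem_filter.2 ⟨vertex_mem_V .., fun h => ha ?_, fun i hi => ?_⟩
  · rw [← vertex_update_self m p a, h]
  · rw [vertex_apply_of_le hi.le, Function.update_of_ne hi.ne]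

lemma sum_U_sub {M : Type*} [AddCommGroup M] (hp : p ∈ V N m) (F : SSp N → M) :
    ∑ q ∈ U N m p, (F q - F p) = ∑ a, F (vertex m (Function.update p m a)) - N • F p := by
  have hself : vertex m (Function.update p m (p m)) = p := by
    rw [Function.update_eq_self, vertex_eq_self hp]
  have hlast : ∀ q ∈ U N m p, q m ≠ p m := fun q hq h =>
    (mem_filter.1 hq).2.1 (by rw [← vertex_update_of_mem_U hq, h, hself])
  calc ∑ q ∈ U N m p, (F q - F p)
      = ∑ a ∈ univ.erase (p m), (F (vertex m (Function.update p m a)) - F p) :=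
        sum_nbij' (· m) (fun a => vertex m (Function.update p m a))
          (fun q hq => mem_erase.2 ⟨hlast q hq, mem_univ _⟩)
          (fun a ha => vertex_update_mem_U (ne_of_mem_erase ha))
          (fun q hq => vertex_update_of_mem_U hq) (fun a _ => vertex_update_self m p a)
          (fun q hq => by rw [vertex_update_of_mem_U hq])
    _ = ∑ a, (F (vertex m (Function.update p m a)) - F p) :=
        sum_erase _ (by rw [hself, sub_self])
    _ = ∑ a, F (vertex m (Function.update p m a)) - N • F p := by simp

/-- The level-`(j + 1)` summand of the Green's function in closed form. The conditions on `x` and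
`y` say that their vertices of level `j + 1` are not in `V_j`; the value is then `2 / N` if these
vertices coincide, `1 / N` if they are neighbours, and `0` otherwise. -/
def greenLevel (N j : ℕ) (x y : SSp N) : ℝ :=
  if x j ≠ x (j + 1) ∧ y j ≠ y (j + 1) then (chi N j x y + chi N (j + 1) x y) / N else 0

lemma Gmat_vertex (N j : ℕ) (x y : SSp N) :
    Gmat N (j + 1) (vertex (j + 1) x) (vertex (j + 1) y) =
      (chi N j x y + chi N (j + 1) x y) / N := by
  have hU : vertex (j + 1) y ∈ U N (j + 1) (vertex (j + 1) x) ↔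
      y ∉ cyl N (j + 2) x ∧ y ∈ cyl N (j + 1) x := by
    rw [U, mem_filter, ne_eq, vertex_eq_vertex_iff]
    refine (and_iff_right (vertex_mem_V ..)).trans
      (and_congr_right fun _ => forall₂_congr fun i hi => ?_)
    rw [vertex_apply_of_le hi.le, vertex_apply_of_le hi.le]
  simp only [Gmat, hU, vertex_eq_vertex_iff, chi_apply]
  by_cases hfine : y ∈ cyl N (j + 2) x
  · have hcoarse : y ∈ cyl N (j + 1) x := (mem_cyl_succ.1 hfine).1
    norm_num [hfine, hcoarse]
  · by_cases hcoarse : y ∈ cyl N (j + 1) x <;> simp [hfine, hcoarse]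

lemma sum_Gmat_mul_chi_mul_chi (N j : ℕ) (x y : SSp N) :
    ∑ r ∈ (V N (j + 1)).filter (fun r => r ∉ V N j),
      ∑ s ∈ (V N (j + 1)).filter (fun s => s ∉ V N j),
        Gmat N (j + 1) r s * chi N (j + 1) r x * chi N (j + 1) s y = greenLevel N j x y := by
  simp_rw [sum_filter_V_mul_chi, vertex_succ_mem_V_iff]
  by_cases hy : y j = y (j + 1)
  · simp [greenLevel, hy]
  · simp_rw [if_pos hy, sum_filter_V_mul_chi, vertex_succ_mem_V_iff, Gmat_vertex]
    simp [greenLevel, hy]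

lemma greenLevel_eq_zero_of_eq (hx : x j = x (j + 1)) (y : SSp N) : greenLevel N j x y = 0 :=
  if_neg fun h => h.1 hx

lemma greenLevel_eq_zero_of_ne {i : ℕ} (hi : i ≤ j) (hxy : x i ≠ y i) :
    greenLevel N j x y = 0 := by
  have hy : y ∉ cyl N (j + 1) x := fun h => hxy (h i (by omega)).symm
  have hchi : chi N j x y = 0 := by rw [chi_apply, if_neg hy]
  simp [greenLevel, chi_succ, hchi]

lemma greenLevel_congr (h : x ∈ cyl N (j + 2) p) (y : SSp N) :
    greenLevel N j x y = greenLevel N j p y := by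
  rw [greenLevel, greenLevel, chi_congr h, chi_congr (mem_cyl_succ.1 h).1, h j (by omega),
    h (j + 1) (by omega)]

lemma greenFn_eq_sum_greenLevel (hx : x ∈ V N m) (hxy : x ≠ y) :
    greenFn N x y = ∑ j ∈ range m, greenLevel N j x y := by
  set d := sInf {i | x i ≠ y i} with hd
  have hdiff : x d ≠ y d := Nat.sInf_mem (Function.ne_iff.1 hxy)
  calc greenFn N x y = ∑ j ∈ range d, greenLevel N j x y := by
        rw [greenFn, rho, ← hd, Nat.add_sub_cancel, ← Ico_add_one_right_eq_Icc,
          sum_Ico_eq_sum_range, Nat.add_sub_cancel]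
        refine sum_congr rfl fun j _ => ?_
        rw [add_comm 1 j]
        exact sum_Gmat_mul_chi_mul_chi N j x y
    _ = ∑ j ∈ range m, greenLevel N j x y := by
        refine sum_congr_of_eq_on_inter (fun j _ hj => ?_) (fun j _ hj => ?_) fun _ _ _ => rfl
        · exact greenLevel_eq_zero_of_eq (mem_V.1 hx j (by simpa using hj)) y
        · exact greenLevel_eq_zero_of_ne (by simpa using hj) hdiff

lemma sum_greenLevel_update (j : ℕ) (p y : SSp N) :
    ∑ a, greenLevel N j (Function.update p (j + 1) a) y =
      if y j ≠ y (j + 1) then chi N j p y else 0 := by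
  have hN : (N : ℝ) ≠ 0 := by exact_mod_cast (p 0).pos.ne'
  have hchi : ∀ a, chi N j (Function.update p (j + 1) a) = chi N j p := fun a =>
    chi_congr fun i hi => Function.update_of_ne hi.ne _ _
  simp only [greenLevel, chi_succ, hchi, Function.update_self,
    Function.update_of_ne j.lt_succ_self.ne]
  by_cases hy : y j = y (j + 1)
  · simp [hy]
  by_cases hmem : y ∈ cyl N (j + 1) p
  · have hpy : p j = y j := (hmem j j.lt_succ_self).symm
    -- `a = y j` contributes `0`, `a = y (j + 1)` contributes `2 / N`, any other `a` gives `1 / N`.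
    have hsplit : ∀ a, (if y j ≠ a then (1 + if y (j + 1) = a then (1 : ℝ) else 0) / N else 0) =
        (1 + (if y (j + 1) = a then 1 else 0) - if y j = a then 1 else 0) / N := fun a => by
      by_cases ha : y j = a
      · subst ha
        simp [Ne.symm hy]
      · simp [ha]
    simp only [chi_apply, hmem, hpy, hy, ne_eq, not_false_eq_true, and_true, if_true] at hsplit ⊢
    rw [sum_congr rfl fun a _ => hsplit a, ← sum_div, sum_sub_distrib, sum_add_distrib]
    simp [hN]
  · simp [chi_apply, hmem]

lemma sum_U_greenLevel_sub (hp : p ∈ V N (j + 1)) (y : SSp N) :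
    ∑ q ∈ U N (j + 1) p, (greenLevel N j q y - greenLevel N j p y) =
      (if p j = p (j + 1) then chi N j p y else 0) - chi N (j + 1) p y := by
  have hN : (N : ℝ) ≠ 0 := by exact_mod_cast (p 0).pos.ne'
  have hdiag : N * greenLevel N j p y =
      if p j ≠ p (j + 1) ∧ y j ≠ y (j + 1) then chi N j p y + chi N (j + 1) p y else 0 := by
    rw [greenLevel, mul_ite, mul_div_cancel₀ _ hN, mul_zero]
  rw [sum_U_sub hp fun q => greenLevel N j q y,
    sum_congr rfl fun a _ => greenLevel_congr (vertex_mem_cyl (j + 1) _) y,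
    sum_greenLevel_update, nsmul_eq_mul, hdiag]
  by_cases hmem : y ∈ cyl N (j + 1) p
  · have hpy : y j = p j := hmem j j.lt_succ_self
    have hchi : chi N j p y = 1 := by rw [chi_apply, if_pos hmem]
    rw [chi_succ, hchi, hpy]
    grind
  · have hchi : chi N j p y = 0 := by rw [chi_apply, if_neg hmem]
    simp [chi_succ, hchi]

section Integral

variable {μ : Measure (SSp N)} {f : SSp N → ℝ}

lemma integrable_chi_mul (hf : Integrable f μ) (m : ℕ) (p : SSp N) :
    Integrable (fun x => chi N m p x * f x) μ := by
  rw [chi_mul_eq_indicator]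
  exact hf.indicator (measurableSet_cyl N (m + 1) p)

lemma integral_chi_mul (N m : ℕ) (μ : Measure (SSp N)) (f : SSp N → ℝ) (p : SSp N) :
    ∫ x, chi N m p x * f x ∂μ = ∫ x in cyl N (m + 1) p, f x ∂μ := by
  rw [chi_mul_eq_indicator, integral_indicator (measurableSet_cyl N (m + 1) p)]

lemma integrable_greenLevel_mul (hf : Integrable f μ) (j : ℕ) (x : SSp N) :
    Integrable (fun y => greenLevel N j x y * f y) μ := by
  by_cases hx : x j = x (j + 1)
  · simp [greenLevel_eq_zero_of_eq hx]
  have heq : (fun y => greenLevel N j x y * f y) = {y : SSp N | y j ≠ y (j + 1)}.indicator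
      fun y => (chi N j x y * f y + chi N (j + 1) x y * f y) / N := by
    ext y
    by_cases hy : y j = y (j + 1)
    · simp [greenLevel, hy]
    · rw [greenLevel, if_pos ⟨hx, hy⟩, Set.indicator_of_mem (show y ∈ _ from hy)]
      ring
  have hmeas : MeasurableSet {y : SSp N | y j ≠ y (j + 1)} :=
    (measurableSet_eq_fun (measurable_pi_apply j) (measurable_pi_apply (j + 1))).compl
  rw [heq]
  exact (((integrable_chi_mul hf j x).add (integrable_chi_mul hf (j + 1) x)).div_const _).indicator
    hmeas

lemma Gop_eq_sum_integral [NullSingletonClass μ] (hf : Integrable f μ) (hx : x ∈ V N m) :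
    Gop N μ f x = ∑ j ∈ range m, ∫ y, greenLevel N j x y * f y ∂μ := by
  rw [← integral_finsetSum _ fun j _ => integrable_greenLevel_mul hf j x, Gop,
    restrict_compl_singleton]
  refine integral_congr_ae ?_
  filter_upwards [Measure.ae_ne μ x] with y hy
  rw [greenFn_eq_sum_greenLevel hx hy.symm, sum_mul]

lemma Gop_sub_Gop_of_mem_U [NullSingletonClass μ] (hf : Integrable f μ) (hp : p ∈ V N (j + 1))
    {q : SSp N} (hq : q ∈ U N (j + 1) p) :
    Gop N μ f q - Gop N μ f p = ∫ y, (greenLevel N j q y - greenLevel N j p y) * f y ∂μ := by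
  obtain ⟨hqV, -, hqp⟩ := mem_filter.1 hq
  have hlower : ∀ i ∈ range j,
      ∫ y, greenLevel N i q y * f y ∂μ = ∫ y, greenLevel N i p y * f y ∂μ := fun i hi => by
    have hagree : q ∈ cyl N (i + 2) p := fun l hl => hqp l (by have := mem_range.1 hi; omega)
    simp only [greenLevel_congr hagree]
  simp only [sub_mul]
  rw [Gop_eq_sum_integral hf hqV, Gop_eq_sum_integral hf hp, sum_range_succ, sum_range_succ,
    sum_congr rfl hlower, add_sub_add_left_eq_sub,
    integral_sub (integrable_greenLevel_mul hf j q) (integrable_greenLevel_mul hf j p)]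

lemma sum_U_Gop_sub [NullSingletonClass μ] (hf : Integrable f μ) (hp : p ∈ V N (j + 1)) :
    ∑ q ∈ U N (j + 1) p, (Gop N μ f q - Gop N μ f p) =
      (if p j = p (j + 1) then ∫ y, chi N j p y * f y ∂μ else 0) -
        ∫ y, chi N (j + 1) p y * f y ∂μ := by
  have hint : ∀ q ∈ U N (j + 1) p,
      Integrable (fun y => (greenLevel N j q y - greenLevel N j p y) * f y) μ := fun q _ => by
    simpa only [sub_mul, Pi.sub_def] using
      (integrable_greenLevel_mul hf j q).sub (integrable_greenLevel_mul hf j p)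
  rw [sum_congr rfl fun q hq => Gop_sub_Gop_of_mem_U hf hp hq, ← integral_finsetSum _ hint]
  simp only [← sum_mul, sum_U_greenLevel_sub hp]
  split_ifs
  · simp only [sub_mul]
    exact integral_sub (integrable_chi_mul hf j p) (integrable_chi_mul hf (j + 1) p)
  · simp only [zero_sub, neg_mul, integral_neg]

end Integral

lemma mem_V_of_kappa_le {k : ℕ} (hp : p ∈ V N k) (hm : kappa N p ≤ m) : p ∈ V N m := by
  have hκ : p ∈ V N (kappa N p) := Nat.sInf_mem (s := {j | p ∈ V N j}) ⟨k, hp⟩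
  exact mem_V.2 fun i hi => mem_V.1 hκ i (hm.trans hi)

lemma apply_ne_apply_succ_of_kappa_eq {k : ℕ} (hp : p ∈ V N k) (hκ : kappa N p = j + 1) :
    p j ≠ p (j + 1) := by
  intro h
  have hj : vertex (j + 1) p ∈ V N j := vertex_succ_mem_V_iff.2 h
  rw [vertex_eq_self (mem_V_of_kappa_le hp hκ.le)] at hj
  have : kappa N p ≤ j := Nat.sInf_le hj
  omega

lemma H_kappa (u : SSp N → ℝ) (p : SSp N) :
    H N (kappa N p) u p = ∑ q ∈ U N (kappa N p) p, (u q - u p) := by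
  rw [H, Icc_self, sum_singleton]

lemma H_succ (u : SSp N → ℝ) (hm : kappa N p ≤ m) :
    H N (m + 1) u p = H N m u p + ∑ q ∈ U N (m + 1) p, (u q - u p) := by
  rw [H, sum_Icc_succ_top (by omega), H]

lemma H_Gop {μ : Measure (SSp N)} [NullSingletonClass μ] {f : SSp N → ℝ} (hf : Integrable f μ)
    {k : ℕ} (hpk : p ∈ V N k) (hp0 : p ∉ V N 0) (hm : kappa N p ≤ m) :
    H N m (Gop N μ f) p = -∫ x, chi N m p x * f x ∂μ := by
  induction m, hm using Nat.le_induction with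
  | base =>
    obtain ⟨j, hκ⟩ : ∃ j, kappa N p = j + 1 :=
      Nat.exists_eq_succ_of_ne_zero fun h => hp0 (mem_V_of_kappa_le hpk h.le)
    rw [H_kappa, hκ, sum_U_Gop_sub hf (mem_V_of_kappa_le hpk hκ.le),
      if_neg (apply_ne_apply_succ_of_kappa_eq hpk hκ), zero_sub]
  | succ m hm ih =>
    have hpm : p ∈ V N m := mem_V_of_kappa_le hpk hm
    rw [H_succ _ hm, ih, sum_U_Gop_sub hf (mem_V_of_kappa_le hpk (hm.trans m.le_succ)),
      if_pos (mem_V.1 hpm m le_rfl)]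
    ring

lemma IsBernoulli.nullSingletonClass (hN : 2 ≤ N) {μ : Measure (SSp N)} (hμ : IsBernoulli N μ) :
    NullSingletonClass μ where
  measure_singleton x := by
    have hlt : (N : ENNReal)⁻¹ < 1 := by
      rw [ENNReal.inv_lt_one]
      exact_mod_cast hN
    refine le_antisymm (ge_of_tendsto'
      (ENNReal.tendsto_pow_atTop_nhds_zero_of_lt_one hlt) fun m => ?_) bot_le
    rw [← hμ m x]
    exact measure_mono (Set.singleton_subset_iff.2 fun _ _ => rfl)

end ShiftSpace

theorem statement16_general {N : ℕ} {μ : Measure (SSp N)} [NullSingletonClass μ]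
    {f : SSp N → ℝ} (hf : Integrable f μ) {p : SSp N} {k : ℕ} (hpk : p ∈ V N k)
    (hp0 : p ∉ V N 0) {m : ℕ} (hm : kappa N p ≤ m) :
    H N m (Gop N μ f) p = -∫ x, chi N m p x * f x ∂μ ∧
      H N m (Gop N μ f) p = -∫ x in cyl N (m + 1) p, f x ∂μ :=
  ⟨H_Gop hf hpk hp0 hm, by rw [H_Gop hf hpk hp0 hm, integral_chi_mul]⟩

/-- for continuous `f`, `p ∈ V_* ∖ V_0` and every `m ≥ κ_p`,
`H_m (G_μ f)(p) = −∫ χ_p^m f dμ = −∫_{[p_1 ⋯ p_{m+1}]} f dμ`. -/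
theorem statement16 (N : ℕ) (hN : 2 ≤ N)
    (μ : Measure (SSp N)) [IsProbabilityMeasure μ] (hμ : IsBernoulli N μ)
    (f : SSp N → ℝ) (hf : Continuous f)
    (p : SSp N) (k : ℕ) (hpk : p ∈ V N k) (hp0 : p ∉ V N 0) :
    ∀ m : ℕ, kappa N p ≤ m →
      H N m (Gop N μ f) p = -∫ x, chi N m p x * f x ∂μ ∧
      H N m (Gop N μ f) p = -∫ x in cyl N (m + 1) p, f x ∂μ := by
  have := hμ.nullSingletonClass hN
  have hfμ : Integrable f μ := hf.integrable_of_hasCompactSupport (.of_compactSpace f)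
  exact fun _ => statement16_general hfμ hpk hp0
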